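/- arXiv:1302.5790 — 3 statements merged into one kernel-verified Lean document; each statement's English description precedes it below -/
import Mathlib

section
/- The geodesic distance on real hyperbolic space H^n_ℝ (n ≥ 2) is a kernel of negative type; equivalently, the square root of the geodesic distance is a Hilbert space distance. -/
open Finset

/-- The inverse hyperbolic cosine on `[1, ∞)`. -/
noncomputable def arcosh (x : ℝ) : ℝ := Real.log (x + Real.sqrt (x ^ 2 - 1))

/-- The Lorentzian form `⟨x,y⟩ = -x⁰y⁰ + x¹y¹ + … + xⁿyⁿ` on `ℝ^{n+1}`. -/
def lorentzForm {n : ℕ} (x y : Fin (n + 1) → ℝ) : ℝ :=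
  -(x 0 * y 0) + ∑ i : Fin n, x i.succ * y i.succ

/-- The geodesic distance on real hyperbolic space `H^n_ℝ`, in terms of negative
representative vectors: `cosh d(x,y) = |⟨x,y⟩| / (⟨x,x⟩⟨y,y⟩)^{1/2}`. -/
noncomputable def hypDist {n : ℕ} (x y : Fin (n + 1) → ℝ) : ℝ :=
  arcosh (|lorentzForm x y| / Real.sqrt (lorentzForm x x * lorentzForm y y))

namespace HypAux

open Filter Topology

variable {X : Type}

theorem psd_nonneg {A : Matrix X X ℝ} (h : A.PosSemidef) {m : ℕ} (x : Fin m → X) (t : Fin m → ℝ) :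
    0 ≤ ∑ i, ∑ j, t i * t j * A (x i) (x j) := by
  have h1 := (h.submatrix x).dotProduct_mulVec_nonneg t
  refine h1.trans_eq ?_
  simp only [dotProduct, Matrix.mulVec, Matrix.submatrix_apply, Finset.mul_sum, Pi.star_apply,
    star_trivial]
  refine Finset.sum_congr rfl fun i _ => Finset.sum_congr rfl fun j _ => by ring

theorem psd_lim {A : ℕ → Matrix X X ℝ} {B : Matrix X X ℝ} (h : ∀ n, (A n).PosSemidef)
    (hl : ∀ x y, Tendsto (fun n => A n x y) atTop (𝓝 (B x y))) : B.PosSemidef := by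
  refine ⟨?_, fun t => ?_⟩
  · ext x y
    refine tendsto_nhds_unique (hl y x) ((hl x y).congr fun n => ?_)
    exact ((h n).1.apply y x).symm.trans (by simp) |>.symm
  · refine ge_of_tendsto' (f := fun n => t.sum fun i xi ↦ t.sum fun j xj ↦ star xi * A n i j * xj)
      (x := atTop) ?_ (fun n => (h n).2 t)
    simp only [Finsupp.sum]
    refine tendsto_finsetSum _ fun i _ => tendsto_finsetSum _ fun j _ => ?_
    exact ((hl i j).const_mul _).mul_const _

theorem psd_rank_one (g : X → ℝ) : (Matrix.of fun x y => g x * g y).PosSemidef := by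
  refine ⟨?_, fun t => ?_⟩
  · ext x y
    simp [mul_comm]
  · have : (t.sum fun i xi ↦ t.sum fun j xj ↦ star xi * (Matrix.of fun x y => g x * g y) i j * xj)
        = (t.sum fun i xi => xi * g i) ^ 2 := by
      simp only [Finsupp.sum, sq, Finset.sum_mul_sum]
      refine Finset.sum_congr rfl fun i _ => Finset.sum_congr rfl fun j _ => ?_
      simp; ring
    rw [this]; positivity

theorem psd_mul {A B : Matrix X X ℝ} (hA : A.PosSemidef) (hB : B.PosSemidef) :
    (Matrix.of fun x y => A x y * B x y).PosSemidef := hA.hadamard hB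

theorem psd_pow {A : Matrix X X ℝ} (hA : A.PosSemidef) (k : ℕ) :
    (Matrix.of fun x y => A x y ^ k).PosSemidef := by
  induction k with
  | zero => simpa using psd_rank_one (fun _ : X => (1 : ℝ))
  | succ k ih => simpa [pow_succ] using psd_mul ih hA

theorem psd_const_mul {A : Matrix X X ℝ} (hA : A.PosSemidef) {c : ℝ} (hc : 0 ≤ c) :
    (Matrix.of fun x y => c * A x y).PosSemidef := hA.smul hc

theorem psd_sum {A : ℕ → Matrix X X ℝ} (h : ∀ n, (A n).PosSemidef) (s : Finset ℕ) :
    (Matrix.of fun x y => ∑ n ∈ s, A n x y).PosSemidef := by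
  have := Matrix.posSemidef_sum s (fun i _ => h i)
  convert this using 1
  ext x y
  simp [Matrix.sum_apply]

theorem psd_hasSum {A : Matrix X X ℝ} (hA : A.PosSemidef) {B : Matrix X X ℝ} (c : ℕ → ℝ)
    (hc : ∀ n, 0 ≤ c n) (e : ℕ → ℕ)
    (hs : ∀ x y, HasSum (fun n => c n * A x y ^ e n) (B x y)) : B.PosSemidef :=
  psd_lim (fun n => psd_sum (fun k => psd_const_mul (psd_pow hA (e k)) (hc k)) (Finset.range n))
    (fun x y => (hs x y).tendsto_sum_nat)

theorem psd_neg_log {A : Matrix X X ℝ} (hA : A.PosSemidef) (h : ∀ x y, |A x y| < 1) :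
    (Matrix.of fun x y => -Real.log (1 - A x y)).PosSemidef := by
  refine psd_hasSum hA (fun n => 1 / ((n : ℝ) + 1)) (fun n => by positivity) (fun n => n + 1)
    fun x y => ?_
  have := Real.hasSum_pow_div_log_of_abs_lt_one (h x y)
  simp only [div_eq_mul_inv, mul_comm (_ ^ _), one_mul] at this ⊢
  exact this

theorem psd_inv {A : Matrix X X ℝ} (hA : A.PosSemidef) (h : ∀ x y, |A x y| < 1) :
    (Matrix.of fun x y => (1 - A x y)⁻¹).PosSemidef := by
  refine psd_hasSum hA (fun n => 1) (fun n => by positivity) (fun n => n) fun x y => ?_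
  simpa using hasSum_geometric_of_abs_lt_one (h x y)

/-- Iteration converging to `1 - √(1 - w)`. -/
noncomputable def iter (w : ℝ) : ℕ → ℝ
  | 0 => 0
  | n + 1 => (w + iter w n ^ 2) / 2

theorem iter_tendsto {w : ℝ} (h0 : 0 ≤ w) (h1 : w ≤ 1) :
    Tendsto (iter w) atTop (𝓝 (1 - √(1 - w))) := by
  set r := √(1 - w) with hr
  have hr0 : 0 ≤ r := Real.sqrt_nonneg _
  have hr2 : r ^ 2 = 1 - w := Real.sq_sqrt (by linarith)
  have hr1 : r ≤ 1 := by nlinarith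
  have hb : ∀ n, 0 ≤ iter w n ∧ iter w n ≤ 1 - r := by
    intro n
    induction n with
    | zero => simp [iter, hr1]
    | succ n ih =>
      simp only [iter]
      constructor
      · positivity
      · nlinarith [ih.1, ih.2]
  have hm : Monotone (iter w) := by
    refine monotone_nat_of_le_succ fun n => ?_
    simp only [iter]
    nlinarith [hb n]
  have hbdd : BddAbove (Set.range (iter w)) := ⟨1 - r, by rintro _ ⟨n, rfl⟩; exact (hb n).2⟩
  have ht := tendsto_atTop_ciSup hm hbdd
  set L := ⨆ n, iter w n
  have hL : L ≤ 1 - r := ciSup_le fun n => (hb n).2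
  have h2 : Tendsto (fun n => iter w (n + 1)) atTop (𝓝 ((w + L ^ 2) / 2)) := by
    simp only [iter]
    exact ((ht.pow 2).const_add w).div_const 2
  have h3 := tendsto_nhds_unique h2 ((tendsto_add_atTop_iff_nat 1).2 ht)
  have : L = 1 - r := by
    have h4 : (1 - L) ^ 2 = r ^ 2 := by nlinarith
    have h5 : 1 - L = r := by
      rwa [sq_eq_sq₀ (by linarith) hr0] at h4
    linarith
  rwa [this] at ht

theorem psd_sqrt {A : Matrix X X ℝ} (hA : A.PosSemidef) (h : ∀ x y, 0 ≤ A x y ∧ A x y ≤ 1) :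
    (Matrix.of fun x y => 1 - √(1 - A x y)).PosSemidef := by
  refine psd_lim (A := fun n => Matrix.of fun x y => iter (A x y) n) (fun n => ?_)
    (fun x y => iter_tendsto (h x y).1 (h x y).2)
  induction n with
  | zero => exact Matrix.PosSemidef.zero
  | succ n ih =>
    have := psd_const_mul (hA.add (psd_pow ih 2)) (c := 1 / 2) (by norm_num)
    convert this using 1
    ext x y
    simp [iter]; ring

/-- A positive semidefinite kernel has a feature map. -/
theorem exists_feature {A : Matrix X X ℝ} (hA : A.PosSemidef) :
    ∃ (H : Type) (_ : NormedAddCommGroup H) (_ : InnerProductSpace ℝ H) (f : X → H),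
      ∀ x y, inner ℝ (f x) (f y) = A x y := by
  let core : PreInnerProductSpace.Core ℝ (X →₀ ℝ) :=
    { inner := fun f g => f.sum fun x z => g.sum fun y w => z * A x y * w
      conj_inner_symm := fun f g => by
        rw [Finsupp.sum_comm]
        simp only [map_finsuppSum]
        refine Finset.sum_congr rfl fun i _ => Finset.sum_congr rfl fun j _ => ?_
        have := hA.1.apply i j
        simp only [star_trivial] at this
        simp [this]; ring
      re_inner_nonneg := fun f => by simpa using hA.2 f
      add_left := fun _ _ _ => by
        rw [Finsupp.sum_add_index'] <;> simp [← Finsupp.sum_add, add_mul]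
      smul_left := fun _ _ _ => by
        rw [Finsupp.sum_smul_index] <;> simp [Finsupp.mul_sum, ← mul_assoc] }
  let _ : SeminormedAddCommGroup (X →₀ ℝ) :=
    InnerProductSpace.Core.toSeminormedAddCommGroup (𝕜 := ℝ) (c := core)
  let _ : InnerProductSpace ℝ (X →₀ ℝ) := .ofCore core
  refine ⟨UniformSpace.Completion (X →₀ ℝ), inferInstance, inferInstance,
    fun x => ((Finsupp.single x (1 : ℝ) : X →₀ ℝ) : UniformSpace.Completion (X →₀ ℝ)),
    fun x y => ?_⟩
  rw [UniformSpace.Completion.inner_coe]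
  change ((Finsupp.single x (1 : ℝ)).sum fun x z =>
    (Finsupp.single y (1 : ℝ)).sum fun y w => z * A x y * w) = _
  simp

theorem arcosh_eq {K : ℝ} (hK : 1 ≤ K) :
    arcosh K = Real.log K + Real.log 2 + Real.log (1 - 1 / 2 * (1 - √(1 - K⁻¹ ^ 2))) := by
  have hK0 : 0 < K := by linarith
  have hs := Real.sqrt_nonneg (1 - K⁻¹ ^ 2)
  have h1 : √(K ^ 2 - 1) = K * √(1 - K⁻¹ ^ 2) := by
    rw [show K ^ 2 - 1 = K ^ 2 * (1 - K⁻¹ ^ 2) by field_simp, Real.sqrt_mul (by positivity),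
      Real.sqrt_sq hK0.le]
  rw [arcosh, h1, ← Real.log_mul (by positivity) (by positivity),
    ← Real.log_mul (by positivity) (by nlinarith)]
  congr 1
  ring

/-- Projective coordinates. -/
noncomputable def proj {n : ℕ} (x : Fin (n + 1) → ℝ) (i : Fin n) : ℝ := x i.succ / x 0

noncomputable def cc {n : ℕ} (x y : Fin (n + 1) → ℝ) : ℝ := ∑ i, proj x i * proj y i

noncomputable def ss {n : ℕ} (x : Fin (n + 1) → ℝ) : ℝ := √(1 - cc x x)

theorem ne_zero_of_neg {n : ℕ} {x : Fin (n + 1) → ℝ} (hx : lorentzForm x x < 0) : x 0 ≠ 0 := by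
  intro h
  have : 0 ≤ ∑ i : Fin n, x i.succ * x i.succ :=
    Finset.sum_nonneg fun i _ => mul_self_nonneg _
  simp only [lorentzForm, h] at hx
  linarith

theorem lorentz_eq {n : ℕ} {x y : Fin (n + 1) → ℝ} (hx : x 0 ≠ 0) (hy : y 0 ≠ 0) :
    lorentzForm x y = -(x 0 * y 0) * (1 - cc x y) := by
  have : x 0 * y 0 * cc x y = ∑ i : Fin n, x i.succ * y i.succ := by
    rw [cc, Finset.mul_sum]
    refine Finset.sum_congr rfl fun i _ => ?_
    simp only [proj]; field_simp
  rw [lorentzForm, ← this]; ring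

theorem cc_self {n : ℕ} {x : Fin (n + 1) → ℝ} (hx : lorentzForm x x < 0) :
    0 ≤ cc x x ∧ cc x x < 1 := by
  refine ⟨Finset.sum_nonneg fun i _ => mul_self_nonneg _, ?_⟩
  have h0 := ne_zero_of_neg hx
  rw [lorentz_eq h0 h0] at hx
  have : 0 < x 0 * x 0 := mul_self_pos.2 h0
  by_contra! h
  nlinarith

theorem cc_cs {n : ℕ} (x y : Fin (n + 1) → ℝ) : cc x y ^ 2 ≤ cc x x * cc y y := by
  have := Finset.sum_mul_sq_le_sq_mul_sq Finset.univ (proj x) (proj y)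
  simpa [cc, sq] using this

theorem cc_abs {n : ℕ} {x y : Fin (n + 1) → ℝ} (hx : lorentzForm x x < 0)
    (hy : lorentzForm y y < 0) : |cc x y| < 1 := by
  have := cc_cs x y
  have hx' := cc_self hx
  have hy' := cc_self hy
  rw [← sq_lt_one_iff_abs_lt_one]
  nlinarith

theorem ss_pos {n : ℕ} {x : Fin (n + 1) → ℝ} (hx : lorentzForm x x < 0) : 0 < ss x :=
  Real.sqrt_pos.2 (by linarith [(cc_self hx).2])

theorem one_le {n : ℕ} {x y : Fin (n + 1) → ℝ} (hx : lorentzForm x x < 0)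
    (hy : lorentzForm y y < 0) : 1 ≤ (1 - cc x y) / (ss x * ss y) := by
  have h1 := ss_pos hx
  have h2 := ss_pos hy
  have h3 := cc_cs x y
  have h4 := cc_self hx
  have h5 := cc_self hy
  have h6 := abs_lt.1 (cc_abs hx hy)
  rw [one_le_div (by positivity)]
  refine (sq_le_sq₀ (by positivity) (by linarith)).1 ?_
  have h7 : ss x ^ 2 = 1 - cc x x := Real.sq_sqrt (by linarith)
  have h8 : ss y ^ 2 = 1 - cc y y := Real.sq_sqrt (by linarith)
  rw [mul_pow, h7, h8]
  have hab : 0 ≤ cc x x * cc y y := mul_nonneg h4.1 h5.1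
  obtain ⟨r, hr0, hr2⟩ : ∃ r : ℝ, 0 ≤ r ∧ r ^ 2 = cc x x * cc y y :=
    ⟨√(cc x x * cc y y), Real.sqrt_nonneg _, Real.sq_sqrt hab⟩
  have hr1 : r < 1 := by nlinarith
  have hcr : cc x y ≤ r := by
    by_contra! h
    nlinarith
  have h9 : 2 * r ≤ cc x x + cc y y := by
    by_contra! h
    nlinarith [sq_nonneg (cc x x - cc y y)]
  have h10 : (1 - r) ^ 2 ≤ (1 - cc x y) ^ 2 := by
    apply pow_le_pow_left₀ <;> linarith
  nlinarith

theorem hypDist_eq {n : ℕ} {x y : Fin (n + 1) → ℝ} (hx : lorentzForm x x < 0)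
    (hy : lorentzForm y y < 0) : hypDist x y = arcosh ((1 - cc x y) / (ss x * ss y)) := by
  have hx0 := ne_zero_of_neg hx
  have hy0 := ne_zero_of_neg hy
  have h4 := cc_self hx
  have h5 := cc_self hy
  have h6 := abs_lt.1 (cc_abs hx hy)
  rw [hypDist, lorentz_eq hx0 hy0, lorentz_eq hx0 hx0, lorentz_eq hy0 hy0]
  congr 1
  have e : -(x 0 * x 0) * (1 - cc x x) * (-(y 0 * y 0) * (1 - cc y y)) =
      (x 0 * y 0) ^ 2 * ((1 - cc x x) * (1 - cc y y)) := by ring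
  rw [e, Real.sqrt_mul (sq_nonneg _), Real.sqrt_sq_eq_abs, Real.sqrt_mul (by linarith), abs_mul,
    abs_neg, abs_of_pos (show 0 < 1 - cc x y by linarith)]
  exact mul_div_mul_left _ _ (abs_ne_zero.2 (mul_ne_zero hx0 hy0))

theorem main {n : ℕ} : ∃ (P : Matrix {x : Fin (n + 1) → ℝ // lorentzForm x x < 0}
      {x : Fin (n + 1) → ℝ // lorentzForm x x < 0} ℝ)
    (g : {x : Fin (n + 1) → ℝ // lorentzForm x x < 0} → ℝ),
    P.PosSemidef ∧ ∀ x y, hypDist x.1 y.1 = g x + g y - P x y := by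
  set X := {x : Fin (n + 1) → ℝ // lorentzForm x x < 0}
  have hC : (Matrix.of fun x y : X => cc x.1 y.1).PosSemidef := by
    have := Matrix.posSemidef_sum (Finset.univ : Finset (Fin n))
      (fun i _ => psd_rank_one (fun x : X => proj x.1 i))
    convert this using 1
    ext x y
    simp [Matrix.sum_apply, cc]
  have hC1 : ∀ x y : X, |cc x.1 y.1| < 1 := fun x y => cc_abs x.2 y.2
  have hL := psd_neg_log hC hC1
  have hW : (Matrix.of fun x y : X => ((1 - cc x.1 y.1) / (ss x.1 * ss y.1))⁻¹ ^ 2).PosSemidef := by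
    refine psd_pow (A := Matrix.of fun x y : X => ((1 - cc x.1 y.1) / (ss x.1 * ss y.1))⁻¹) ?_ 2
    convert psd_mul (psd_rank_one (fun x : X => ss x.1)) (psd_inv hC hC1) using 1
    ext x y
    simp [div_eq_mul_inv]
  have hV := psd_sqrt hW (fun x y => by
    have := one_le x.2 y.2
    refine ⟨by simp only [Matrix.of_apply]; positivity, ?_⟩
    exact pow_le_one₀ (by positivity) (inv_le_one_of_one_le₀ this))
  have hM := psd_neg_log (psd_const_mul hV (c := 1 / 2) (by norm_num)) (fun x y => by
    have h1 := one_le x.2 y.2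
    simp only [Matrix.of_apply]
    have h2 := Real.sqrt_nonneg (1 - ((1 - cc x.1 y.1) / (ss x.1 * ss y.1))⁻¹ ^ 2)
    have h3 : √(1 - ((1 - cc x.1 y.1) / (ss x.1 * ss y.1))⁻¹ ^ 2) ≤ 1 := by
      rw [Real.sqrt_le_one]
      have := sq_nonneg ((1 - cc x.1 y.1) / (ss x.1 * ss y.1))⁻¹
      linarith
    rw [abs_lt]; constructor <;> linarith)
  refine ⟨_, fun x => Real.log 2 / 2 - Real.log (ss x.1), hL.add hM, fun x y => ?_⟩
  have h1 := ss_pos x.2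
  have h2 := ss_pos y.2
  have h6 := abs_lt.1 (hC1 x y)
  rw [hypDist_eq x.2 y.2, arcosh_eq (one_le x.2 y.2),
    Real.log_div (by linarith) (by positivity), Real.log_mul h1.ne' h2.ne']
  simp only [Matrix.add_apply, Matrix.of_apply]
  ring

theorem hypDist_self {n : ℕ} {x : Fin (n + 1) → ℝ} (hx : lorentzForm x x < 0) :
    hypDist x x = 0 := by
  have h1 := ss_pos hx
  have h7 : ss x * ss x = 1 - cc x x := Real.mul_self_sqrt (by linarith [(cc_self hx).2])
  rw [hypDist_eq hx hx, ← h7, div_self (by positivity)]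
  simp [arcosh]

end HypAux

/-- The geodesic distance on real hyperbolic space `H^n_ℝ` (`n ≥ 2`) is a kernel of
negative type; equivalently, the square root of the geodesic distance is a Hilbert
space distance. -/
theorem hyperbolic_dist_negative_type (n : ℕ) (hn : 2 ≤ n) :
    (∀ (m : ℕ) (x : Fin m → (Fin (n + 1) → ℝ)) (t : Fin m → ℝ),
      (∀ i, lorentzForm (x i) (x i) < 0) → (∑ i, t i) = 0 →
      ∑ i, ∑ j, t i * t j * hypDist (x i) (x j) ≤ 0) ∧
    (∃ (H : Type) (_ : NormedAddCommGroup H) (_ : InnerProductSpace ℝ H)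
        (f : {x : Fin (n + 1) → ℝ // lorentzForm x x < 0} → H),
      ∀ x y, ‖f x - f y‖ = Real.sqrt (hypDist x.1 y.1)) := by
  obtain ⟨P, g, hP, hd⟩ := HypAux.main (n := n)
  constructor
  · intro m x t hx ht
    have h := HypAux.psd_nonneg hP (fun i => ⟨x i, hx i⟩) t
    have e : ∑ i, ∑ j, t i * t j * hypDist (x i) (x j) =
        (∑ i, t i * g ⟨x i, hx i⟩) * (∑ j, t j) + (∑ i, t i) * (∑ j, t j * g ⟨x j, hx j⟩)
        - ∑ i, ∑ j, t i * t j * P ⟨x i, hx i⟩ ⟨x j, hx j⟩ := by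
      rw [Finset.sum_mul_sum, Finset.sum_mul_sum, ← Finset.sum_add_distrib,
        ← Finset.sum_sub_distrib]
      refine Finset.sum_congr rfl fun i _ => ?_
      rw [← Finset.sum_add_distrib, ← Finset.sum_sub_distrib]
      refine Finset.sum_congr rfl fun j _ => ?_
      rw [hd ⟨x i, hx i⟩ ⟨x j, hx j⟩]; ring
    rw [e, ht]
    linarith
  · obtain ⟨H, i1, i2, f, hf⟩ :=
      HypAux.exists_feature (HypAux.psd_const_mul hP (c := 1 / 2) (by norm_num))
    refine ⟨H, i1, i2, f, fun x y => ?_⟩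
    rw [← Real.sqrt_sq (norm_nonneg (f x - f y)), norm_sub_sq_real,
      ← real_inner_self_eq_norm_sq, ← real_inner_self_eq_norm_sq, hf, hf, hf, hd x y]
    have hxx := hd x x
    have hyy := hd y y
    rw [HypAux.hypDist_self x.2] at hxx
    rw [HypAux.hypDist_self y.2] at hyy
    simp only [Matrix.of_apply]
    congr 1
    linarith
end

section
/- The geodesic distance d on real hyperbolic space H^n_ℝ is a hypermetric: for each finite subset {x₁,…,xₘ} and integers t₁,…,tₘ with ∑tᵢ = 1, one has ∑ᵢⱼ tᵢtⱼ d(xᵢ,xⱼ) ≤ 0. -/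
open Finset

open MeasureTheory

namespace HypAux

variable {n : ℕ}

lemma lf_comm (x y : Fin (n + 1) → ℝ) : lorentzForm x y = lorentzForm y x := by
  simp [lorentzForm, mul_comm]

lemma lf_add (x y z : Fin (n + 1) → ℝ) :
    lorentzForm (x + y) z = lorentzForm x z + lorentzForm y z := by
  simp only [lorentzForm, Pi.add_apply, add_mul, Finset.sum_add_distrib]; ring

lemma lf_smul (c : ℝ) (x z : Fin (n + 1) → ℝ) :
    lorentzForm (c • x) z = c * lorentzForm x z := by
  simp only [lorentzForm, Pi.smul_apply, smul_eq_mul, mul_add, Finset.mul_sum]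
  congr 1
  · ring
  · exact Finset.sum_congr rfl fun i _ => by ring

lemma lf_sub (x y z : Fin (n + 1) → ℝ) :
    lorentzForm (x - y) z = lorentzForm x z - lorentzForm y z := by
  have : x - y = x + (-1 : ℝ) • y := by ext i; simp; ring
  rw [this, lf_add, lf_smul]; ring

lemma lf_add_r (x y z : Fin (n + 1) → ℝ) :
    lorentzForm z (x + y) = lorentzForm z x + lorentzForm z y := by
  rw [lf_comm, lf_add, lf_comm x, lf_comm y]

lemma lf_sub_r (x y z : Fin (n + 1) → ℝ) :
    lorentzForm z (x - y) = lorentzForm z x - lorentzForm z y := by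
  rw [lf_comm, lf_sub, lf_comm x, lf_comm y]

lemma lf_smul_r (c : ℝ) (x z : Fin (n + 1) → ℝ) :
    lorentzForm z (c • x) = c * lorentzForm z x := by
  rw [lf_comm, lf_smul, lf_comm]

lemma lf_cont (x : Fin (n + 1) → ℝ) : Continuous (fun v => lorentzForm x v) := by
  unfold lorentzForm; fun_prop

lemma lq_cont : Continuous (fun v : Fin (n + 1) → ℝ => lorentzForm v v) := by
  unfold lorentzForm; fun_prop

/-- Cauchy-Schwarz for the spatial parts. -/
lemma cs (x v : Fin (n + 1) → ℝ) :
    (lorentzForm x v + x 0 * v 0) ^ 2 ≤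
      (lorentzForm x x + x 0 ^ 2) * (lorentzForm v v + v 0 ^ 2) := by
  have := Finset.sum_mul_sq_le_sq_mul_sq (Finset.univ : Finset (Fin n))
    (fun i => x i.succ) (fun i => v i.succ)
  have e : ∀ u w : Fin (n + 1) → ℝ,
      lorentzForm u w + u 0 * w 0 = ∑ i : Fin n, u i.succ * w i.succ := by
    intro u w; simp only [lorentzForm]; ring
  rw [pow_two (x 0), pow_two (v 0), e, e, e]
  simpa only [pow_two] using this

lemma sp_nonneg (v : Fin (n + 1) → ℝ) : 0 ≤ lorentzForm v v + v 0 ^ 2 := by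
  have : lorentzForm v v + v 0 ^ 2 = ∑ i : Fin n, v i.succ * v i.succ := by
    simp only [lorentzForm]; ring
  rw [this]; exact Finset.sum_nonneg fun i _ => mul_self_nonneg _

lemma sp_coord (v : Fin (n + 1) → ℝ) (i : Fin n) :
    v i.succ ^ 2 ≤ lorentzForm v v + v 0 ^ 2 := by
  have : lorentzForm v v + v 0 ^ 2 = ∑ i : Fin n, v i.succ * v i.succ := by
    simp only [lorentzForm]; ring
  rw [this, pow_two]
  exact Finset.single_le_sum (f := fun i : Fin n => v i.succ * v i.succ)
    (fun i _ => mul_self_nonneg _) (Finset.mem_univ i)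

lemma orth_pos {x v : Fin (n + 1) → ℝ} (hx : lorentzForm x x < 0)
    (hxv : lorentzForm x v = 0) (hv : v ≠ 0) : 0 < lorentzForm v v := by
  have h1 := cs x v
  have h2 := sp_nonneg v
  have h3 := sp_nonneg x
  have hx0 : 0 < x 0 ^ 2 := by linarith
  rw [hxv, zero_add] at h1
  rcases h2.eq_or_lt with h | h
  · exfalso
    apply hv
    rw [← h, mul_zero, mul_pow] at h1
    have hv0 : v 0 ^ 2 ≤ 0 := by
      by_contra hc
      push Not at hc
      nlinarith [mul_pos hx0 hc]
    have hv0' : v 0 = 0 := by nlinarith [sq_nonneg (v 0)]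
    ext i
    refine Fin.cases hv0' (fun j => ?_) i
    have := sp_coord v j
    rw [← h] at this
    simpa using pow_eq_zero_iff (two_ne_zero) |>.1 (le_antisymm this (sq_nonneg _))
  · have : x 0 ^ 2 * v 0 ^ 2 < x 0 ^ 2 * (lorentzForm v v + v 0 ^ 2) := by
      rw [← mul_pow]
      refine h1.trans_lt ?_
      apply mul_lt_mul_of_pos_right _ h
      linarith
    have := lt_of_mul_lt_mul_left this hx0.le
    linarith

lemma upper_neg {x y : Fin (n + 1) → ℝ} (hx : lorentzForm x x < 0) (hy : lorentzForm y y < 0)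
    (hx0 : 0 < x 0) (hy0 : 0 < y 0) : lorentzForm x y < 0 := by
  by_contra hc
  push Not at hc
  have h1 := cs x y
  have h2 := sp_nonneg x
  have h3 := sp_nonneg y
  have h4 : (lorentzForm x x + x 0 ^ 2) * (lorentzForm y y + y 0 ^ 2) < x 0 ^ 2 * y 0 ^ 2 := by
    have : 0 < y 0 ^ 2 := by positivity
    have : 0 < x 0 ^ 2 := by positivity
    nlinarith
  have h5 : 0 < x 0 * y 0 := by positivity
  nlinarith

/-- unit future timelike vectors -/
def U (x : Fin (n + 1) → ℝ) : Prop := lorentzForm x x = -1 ∧ 0 < x 0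

/-- The separating set. -/
def A (x y : Fin (n + 1) → ℝ) : Set (Fin (n + 1) → ℝ) :=
  {v | 0 < lorentzForm x v ∧ lorentzForm y v ≤ 0 ∧ lorentzForm v v < 1}

lemma A_meas (x y : Fin (n + 1) → ℝ) : MeasurableSet (A x y) := by
  refine MeasurableSet.inter ?_ (MeasurableSet.inter ?_ ?_)
  · exact (isOpen_lt continuous_const (lf_cont x)).measurableSet
  · exact (isClosed_le (lf_cont y) continuous_const).measurableSet
  · exact (isOpen_lt lq_cont continuous_const).measurableSet

lemma A_fin {x y : Fin (n + 1) → ℝ} (hx : U x) (hy : U y) : volume (A x y) < ⊤ := by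
  obtain ⟨hx, hx0⟩ := hx
  obtain ⟨hy, hy0⟩ := hy
  -- a uniform constant
  set M : ℝ := x 0 ^ 2 + y 0 ^ 2 with hM
  have hxs := sp_nonneg x
  have hys := sp_nonneg y
  have key : ∀ v ∈ A x y, lorentzForm v v + v 0 ^ 2 ≤ M := by
    rintro v ⟨h1, h2, h3⟩
    have hw := sp_nonneg v
    set W := lorentzForm v v + v 0 ^ 2 with hW
    rcases le_or_gt 0 (v 0) with h0 | h0
    · have hc := cs x v
      rw [hx, ← hW] at hc
      have : (x 0 * v 0) ^ 2 ≤ (-1 + x 0 ^ 2) * W := by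
        refine le_trans ?_ hc
        have : 0 ≤ x 0 * v 0 := by positivity
        nlinarith
      nlinarith [sq_nonneg (y 0), sq_nonneg (x 0), mul_nonneg (sq_nonneg (x 0)) (sub_nonneg.2 h3.le)]
    · have hc := cs y v
      rw [hy, ← hW] at hc
      have : (y 0 * v 0) ^ 2 ≤ (-1 + y 0 ^ 2) * W := by
        refine le_trans ?_ hc
        have : y 0 * v 0 < 0 := mul_neg_of_pos_of_neg hy0 h0
        nlinarith
      nlinarith [sq_nonneg (y 0), sq_nonneg (x 0), mul_nonneg (sq_nonneg (y 0)) (sub_nonneg.2 h3.le)]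
  have key0 : ∀ v ∈ A x y, v 0 ^ 2 ≤ M := by
    rintro v hv
    have := key v hv
    obtain ⟨h1, h2, h3⟩ := hv
    have hw := sp_nonneg v
    set W := lorentzForm v v + v 0 ^ 2 with hW
    rcases le_or_gt 0 (v 0) with h0 | h0
    · have hc := cs x v
      rw [hx, ← hW] at hc
      have : (x 0 * v 0) ^ 2 ≤ (-1 + x 0 ^ 2) * W := by
        refine le_trans ?_ hc
        have : 0 ≤ x 0 * v 0 := by positivity
        nlinarith
      have h5 : x 0 ^ 2 * v 0 ^ 2 ≤ x 0 ^ 2 * W := by nlinarith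
      have := le_of_mul_le_mul_left h5 (by positivity)
      linarith
    · have hc := cs y v
      rw [hy, ← hW] at hc
      have : (y 0 * v 0) ^ 2 ≤ (-1 + y 0 ^ 2) * W := by
        refine le_trans ?_ hc
        have : y 0 * v 0 < 0 := mul_neg_of_pos_of_neg hy0 h0
        nlinarith
      have h5 : y 0 ^ 2 * v 0 ^ 2 ≤ y 0 ^ 2 * W := by nlinarith
      have := le_of_mul_le_mul_left h5 (by positivity)
      linarith
  have hsub : A x y ⊆ Set.Icc (fun _ => -(M + 1)) (fun _ => M + 1) := by
    intro v hv
    have hb : ∀ i, v i ^ 2 ≤ M := by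
      intro i
      refine Fin.cases (key0 v hv) (fun j => (sp_coord v j).trans (key v hv)) i
    constructor
    · intro i
      show -(M + 1) ≤ v i
      nlinarith [hb i, sq_nonneg (v i + 1)]
    · intro i
      show v i ≤ M + 1
      nlinarith [hb i, sq_nonneg (v i - 1)]
  exact (measure_mono hsub).trans_lt isCompact_Icc.measure_lt_top

/-- Lorentz reflection. -/
noncomputable def R (w : Fin (n + 1) → ℝ) : (Fin (n + 1) → ℝ) →ₗ[ℝ] (Fin (n + 1) → ℝ) where
  toFun u := u - (2 * lorentzForm u w / lorentzForm w w) • w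
  map_add' a b := by
    rw [lf_add]; ext i; simp; ring
  map_smul' c a := by
    rw [lf_smul]; ext i; simp; ring

lemma R_apply (w u : Fin (n + 1) → ℝ) :
    R w u = u - (2 * lorentzForm u w / lorentzForm w w) • w := rfl

lemma R_adj {w : Fin (n + 1) → ℝ} (u v : Fin (n + 1) → ℝ) :
    lorentzForm (R w u) v = lorentzForm u (R w v) := by
  rw [R_apply, R_apply, lf_sub, lf_sub_r, lf_smul, lf_smul_r, lf_comm w v]; ring

lemma R_invol {w : Fin (n + 1) → ℝ} (hw : lorentzForm w w ≠ 0) (u : Fin (n + 1) → ℝ) :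
    R w (R w u) = u := by
  have : lorentzForm (R w u) w = - lorentzForm u w := by
    rw [R_apply, lf_sub, lf_smul]; field_simp; ring
  rw [R_apply w (R w u), this, R_apply]
  ext i; simp; ring

lemma R_isom {w : Fin (n + 1) → ℝ} (hw : lorentzForm w w ≠ 0) (u v : Fin (n + 1) → ℝ) :
    lorentzForm (R w u) (R w v) = lorentzForm u v := by
  rw [R_adj, R_invol hw]

lemma R_vol {w : Fin (n + 1) → ℝ} (hw : lorentzForm w w ≠ 0) (x y : Fin (n + 1) → ℝ) :
    volume (A (R w x) (R w y)) = volume (A x y) := by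
  have hcomp : (R w) ∘ₗ (R w) = LinearMap.id := by
    ext1 u; ext1; simp [R_invol hw]
  have hd : LinearMap.det (R w) * LinearMap.det (R w) = 1 := by
    rw [← LinearMap.det_comp, hcomp, LinearMap.det_id]
  have hd0 : LinearMap.det (R w) ≠ 0 := by
    intro h; rw [h] at hd; simp at hd
  have habs : |LinearMap.det (R w)| = 1 := by
    rcases mul_self_eq_one_iff.1 hd with h | h <;> simp [h]
  have hset : A (R w x) (R w y) = (R w) ⁻¹' (A x y) := by
    ext v
    simp only [A, Set.mem_setOf_eq, Set.mem_preimage, R_adj, R_invol hw]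
  rw [hset, Measure.addHaar_preimage_linearMap _ hd0, abs_inv, habs]
  simp

lemma R_swap {x y : Fin (n + 1) → ℝ} (hxy : lorentzForm x x = lorentzForm y y)
    (hw : lorentzForm (x - y) (x - y) ≠ 0) : R (x - y) x = y := by
  have h : 2 * lorentzForm x (x - y) = lorentzForm (x - y) (x - y) := by
    rw [lf_sub, lf_sub_r, lf_sub_r, lf_comm y x, hxy]; ring
  rw [R_apply, h, div_self hw]; simp

lemma exists_move {x y : Fin (n + 1) → ℝ} (hx : U x) (hy : U y) (z : Fin (n + 1) → ℝ)  :
    ∃ z', lorentzForm z' z' = lorentzForm z z ∧ lorentzForm y z' = lorentzForm x z ∧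
      volume (A x z) = volume (A y z') := by
  by_cases h : x = y
  · exact ⟨z, rfl, by rw [h], by rw [h]⟩
  have hneg := upper_neg (by linarith [hx.1]) (by linarith [hy.1]) hx.2 hy.2
  have hw : lorentzForm (x - y) (x - y) ≠ 0 := by
    refine (orth_pos (x := x + y) ?_ ?_ (sub_ne_zero.2 h)).ne'
    · rw [lf_add, lf_add_r, lf_add_r, lf_comm y x, hx.1, hy.1]; linarith
    · rw [lf_add, lf_sub_r, lf_sub_r, lf_comm y x, hx.1, hy.1]; ring
  have hs := R_swap (hx.1.trans hy.1.symm) hw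
  refine ⟨R (x - y) z, R_isom hw _ _, ?_, ?_⟩
  · have := R_isom hw x z
    rwa [hs] at this
  · have := R_vol hw x z
    rw [hs] at this
    exact this.symm

lemma vol_eq {x y x' y' : Fin (n + 1) → ℝ} (hx : U x) (hy : U y) (hx' : U x') (hy' : U y')
    (h : lorentzForm x y = lorentzForm x' y') : volume (A x y) = volume (A x' y') := by
  obtain ⟨z, hz1, hz2, hz3⟩ := exists_move hx hx' y
  rw [hz3]
  by_cases hzy : z = y'
  · rw [hzy]
  have hw : lorentzForm (z - y') (z - y') ≠ 0 := by
    refine (orth_pos (x := x') (by linarith [hx'.1]) ?_ (sub_ne_zero.2 hzy)).ne'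
    rw [lf_sub_r, hz2, h]; ring
  have hs := R_swap (hz1.trans (hy.1.trans hy'.1.symm)) hw
  have hfix : R (z - y') x' = x' := by
    have : lorentzForm x' (z - y') = 0 := by rw [lf_sub_r, hz2, h]; ring
    rw [R_apply, this]; simp
  have := R_vol hw x' z
  rw [hs, hfix] at this
  exact this.symm

/-- standard geodesic -/
noncomputable def γ (i1 : Fin n) (s : ℝ) : Fin (n + 1) → ℝ :=
  Fin.cons (Real.cosh s) (Pi.single i1 (Real.sinh s))

lemma lf_γ (i1 : Fin n) (s : ℝ) (v : Fin (n + 1) → ℝ) :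
    lorentzForm (γ i1 s) v = -(Real.cosh s * v 0) + Real.sinh s * v i1.succ := by
  simp [lorentzForm, γ, Pi.single_apply]

lemma lf_γγ (i1 : Fin n) (s t : ℝ) :
    lorentzForm (γ i1 s) (γ i1 t) = -Real.cosh (s - t) := by
  rw [lf_γ, Real.cosh_sub]
  simp [γ]; ring

lemma U_γ (i1 : Fin n) (s : ℝ) : U (γ i1 s) :=
  ⟨by rw [lf_γγ]; simp, by simp [γ, Real.cosh_pos]⟩

noncomputable def g (i1 : Fin n) (s : ℝ) : ℝ := (volume (A (γ i1 0) (γ i1 s))).toReal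

lemma A_self (x : Fin (n + 1) → ℝ) : A x x = ∅ := by
  ext v
  simp only [A, Set.mem_setOf_eq, Set.mem_empty_iff_false, iff_false]
  rintro ⟨h1, h2, -⟩
  linarith

lemma g_zero (i1 : Fin n) : g i1 0 = 0 := by simp [g, A_self]

lemma g_nonneg (i1 : Fin n) (s : ℝ) : 0 ≤ g i1 s := ENNReal.toReal_nonneg

lemma g_eq (i1 : Fin n) {x y : Fin (n + 1) → ℝ} (hx : U x) (hy : U y) {s : ℝ}
    (h : lorentzForm x y = -Real.cosh s) : (volume (A x y)).toReal = g i1 s := by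
  rw [g, vol_eq hx hy (U_γ i1 0) (U_γ i1 s)]
  rw [h, lf_γγ]; simp

lemma g_add (i1 : Fin n) {a b : ℝ} (ha : 0 ≤ a) (hb : 0 ≤ b) :
    g i1 (a + b) = g i1 a + g i1 b := by
  rcases ha.eq_or_lt with rfl | ha
  · simp [g_zero]
  rcases hb.eq_or_lt with rfl | hb
  · simp [g_zero]
  have h1 : (volume (A (γ i1 a) (γ i1 (a + b)))).toReal = g i1 b :=
    g_eq i1 (U_γ _ _) (U_γ _ _) (by rw [lf_γγ, ← Real.cosh_neg]; congr 2; ring)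
  have hsa := Real.sinh_pos_iff.2 ha
  have hsb := Real.sinh_pos_iff.2 hb
  have hsab := Real.sinh_pos_iff.2 (add_pos ha hb)
  have hrel : ∀ v, Real.sinh (a + b) * lorentzForm (γ i1 a) v =
      Real.sinh b * lorentzForm (γ i1 0) v + Real.sinh a * lorentzForm (γ i1 (a + b)) v := by
    intro v
    simp only [lf_γ, Real.sinh_add, Real.cosh_add, Real.cosh_zero, Real.sinh_zero]
    linear_combination (-(Real.sinh b * v 0)) * Real.cosh_sq_sub_sinh_sq a
  have hset : A (γ i1 0) (γ i1 (a + b)) =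
      A (γ i1 0) (γ i1 a) ∪ A (γ i1 a) (γ i1 (a + b)) := by
    ext v
    have hr := hrel v
    simp only [A, Set.mem_setOf_eq, Set.mem_union]
    set p := lorentzForm (γ i1 0) v
    set q := lorentzForm (γ i1 a) v
    set r := lorentzForm (γ i1 (a + b)) v
    constructor
    · rintro ⟨h1, h2, h3⟩
      rcases le_or_gt q 0 with h | h
      · exact Or.inl ⟨h1, h, h3⟩
      · exact Or.inr ⟨h, h2, h3⟩
    · rintro (⟨h1, h2, h3⟩ | ⟨h1, h2, h3⟩)
      · refine ⟨h1, ?_, h3⟩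
        by_contra hc
        push Not at hc
        nlinarith [mul_pos hsb h1, mul_pos hsa hc]
      · refine ⟨?_, h2, h3⟩
        by_contra hc
        push Not at hc
        nlinarith [mul_pos hsab h1]
  have hdis : Disjoint (A (γ i1 0) (γ i1 a)) (A (γ i1 a) (γ i1 (a + b))) := by
    rw [Set.disjoint_left]
    rintro v ⟨-, h, -⟩ ⟨h', -, -⟩
    linarith
  rw [← h1, g, g, hset, measure_union hdis (A_meas _ _),
    ENNReal.toReal_add (A_fin (U_γ _ _) (U_γ _ _)).ne (A_fin (U_γ _ _) (U_γ _ _)).ne]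

lemma g_pos (i1 : Fin n) : 0 < g i1 1 := by
  refine ENNReal.toReal_pos ?_ (A_fin (U_γ _ _) (U_γ _ _)).ne
  set O : Set (Fin (n + 1) → ℝ) := {v | 0 < lorentzForm (γ i1 0) v ∧
    lorentzForm (γ i1 1) v < 0 ∧ lorentzForm v v < 1} with hO
  have hopen : IsOpen O := by
    refine IsOpen.inter ?_ (IsOpen.inter ?_ ?_)
    · exact isOpen_lt continuous_const (lf_cont _)
    · exact isOpen_lt (lf_cont _) continuous_const
    · exact isOpen_lt lq_cont continuous_const
  have hs : 0 < Real.sinh 1 := Real.sinh_pos_iff.2 one_pos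
  have hc : 0 < Real.cosh 1 := Real.cosh_pos 1
  have hne : O.Nonempty := by
    refine ⟨Fin.cons (-(Real.sinh 1 / Real.cosh 1 / 2)) (Pi.single i1 (-1)), ?_, ?_, ?_⟩
    · rw [lf_γ]; simp; positivity
    · rw [lf_γ]; simp
      field_simp
      nlinarith
    · simp [lorentzForm, Pi.single_apply]
      positivity
  have hsub : O ⊆ A (γ i1 0) (γ i1 1) := fun v hv => ⟨hv.1, hv.2.1.le, hv.2.2⟩
  exact (lt_of_lt_of_le (hopen.measure_pos volume hne) (measure_mono hsub)).ne'

lemma cauchy (f : ℝ → ℝ) (h0 : f 0 = 0) (hf : ∀ s, 0 ≤ f s)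
    (hadd : ∀ a b, 0 ≤ a → 0 ≤ b → f (a + b) = f a + f b) (s : ℝ) (hs : 0 ≤ s) :
    f s = s * f 1 := by
  have hmul : ∀ (k : ℕ) (a : ℝ), 0 ≤ a → f (k * a) = k * f a := by
    intro k a ha
    induction k with
    | zero => simp [h0]
    | succ k ih =>
      push_cast
      rw [add_mul, one_mul, hadd _ _ (by positivity) ha, ih]; ring
  have hmono : ∀ a b, 0 ≤ a → a ≤ b → f a ≤ f b := by
    intro a b ha hab
    have := hadd a (b - a) ha (by linarith)
    rw [add_sub_cancel] at this
    linarith [hf (b - a)]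
  have hbd : ∀ k : ℕ, |k * (f s - s * f 1)| ≤ f 1 := by
    intro k
    have hks : 0 ≤ k * s := by positivity
    have e1 : (⌊k * s⌋₊ : ℝ) * f 1 ≤ k * f s := by
      have := hmono (⌊k * s⌋₊ * 1) (k * s) (by positivity) (by simpa using Nat.floor_le hks)
      rwa [hmul _ _ zero_le_one, hmul _ _ hs] at this
    have e2 : k * f s ≤ ((⌊k * s⌋₊ + 1 : ℕ) : ℝ) * f 1 := by
      have := hmono (k * s) (((⌊k * s⌋₊ + 1 : ℕ) : ℝ) * 1) hks
        (by push_cast; simpa using (Nat.lt_floor_add_one (k * s)).le)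
      rwa [hmul _ _ zero_le_one, hmul _ _ hs] at this
    push_cast at e2
    have e3 := Nat.floor_le hks
    have e4 := (Nat.lt_floor_add_one (k * s)).le
    have := hf 1
    rw [abs_le]
    constructor <;> nlinarith
  by_contra hne
  have hpos : 0 < |f s - s * f 1| := abs_pos.2 (sub_ne_zero.2 hne)
  obtain ⟨k, hk⟩ := exists_nat_gt (f 1 / |f s - s * f 1|)
  rw [div_lt_iff₀ hpos] at hk
  have := hbd k
  rw [abs_mul, Nat.abs_cast] at this
  linarith

lemma arcosh_cosh' {s : ℝ} (hs : 0 ≤ s) : arcosh (Real.cosh s) = s := by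
  have h : Real.cosh s ^ 2 - 1 = Real.sinh s ^ 2 := by linarith [Real.cosh_sq s]
  rw [arcosh, h, Real.sqrt_sq (Real.sinh_nonneg_iff.2 hs), Real.cosh_add_sinh, Real.log_exp]

/-- Crofton formula. -/
lemma crofton (i1 : Fin n) {x y : Fin (n + 1) → ℝ} (hx : U x) (hy : U y) :
    (volume (A x y)).toReal = arcosh (-lorentzForm x y) * g i1 1 := by
  have hneg := upper_neg (by linarith [hx.1]) (by linarith [hy.1]) hx.2 hy.2
  have h1 : 1 ≤ -lorentzForm x y := by
    by_cases h : x = y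
    · rw [← h, hx.1]; norm_num
    have := orth_pos (x := x + y) (v := x - y) ?_ ?_ (sub_ne_zero.2 h)
    · rw [lf_sub, lf_sub_r, lf_sub_r, lf_comm y x, hx.1, hy.1] at this
      linarith
    · rw [lf_add, lf_add_r, lf_add_r, lf_comm y x, hx.1, hy.1]; linarith
    · rw [lf_add, lf_sub_r, lf_sub_r, lf_comm y x, hx.1, hy.1]; ring
  obtain ⟨s, hs, hc⟩ : ∃ s, 0 ≤ s ∧ Real.cosh s = -lorentzForm x y :=
    ⟨Real.arcosh (-lorentzForm x y), Real.arcosh_nonneg h1, Real.cosh_arcosh h1⟩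
  rw [← hc, arcosh_cosh' hs, g_eq i1 hx hy (s := s) (by linarith)]
  exact cauchy (g i1) (g_zero i1) (g_nonneg i1) (fun a b ha hb => g_add i1 ha hb) s hs

/-- Normalisation. -/
lemma exists_unit (x : Fin (n + 1) → ℝ) (hx : lorentzForm x x < 0) :
    ∃ c : ℝ, |c| = (Real.sqrt (-lorentzForm x x))⁻¹ ∧ U (c • x) := by
  have hq : 0 < Real.sqrt (-lorentzForm x x) := Real.sqrt_pos.2 (by linarith)
  have hsq := Real.sq_sqrt (show 0 ≤ -lorentzForm x x by linarith)
  have hx0 : x 0 ≠ 0 := by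
    intro h
    have := sp_nonneg x
    rw [h] at this
    norm_num at this
    linarith
  set r := Real.sqrt (-lorentzForm x x)
  have hxx : lorentzForm x x = -r ^ 2 := by linarith
  rcases lt_or_gt_of_ne hx0 with h | h
  · refine ⟨-r⁻¹, by rw [abs_neg, abs_of_pos (inv_pos.2 hq)], ?_, ?_⟩
    · rw [lf_smul, lf_smul_r, hxx]; field_simp
    · simp only [Pi.smul_apply, smul_eq_mul]
      exact mul_pos_of_neg_of_neg (by simpa using hq) h
  · refine ⟨r⁻¹, by rw [abs_of_pos (inv_pos.2 hq)], ?_, ?_⟩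
    · rw [lf_smul, lf_smul_r, hxx]; field_simp
    · simp only [Pi.smul_apply, smul_eq_mul]
      positivity

lemma int_ineq (p : ℤ) : (p : ℝ) * (1 - p) ≤ 0 := by
  have : p * (1 - p) ≤ 0 := by
    rcases le_or_gt p 0 with h | h
    · exact mul_nonpos_of_nonpos_of_nonneg h (by lia)
    · exact mul_nonpos_of_nonneg_of_nonpos h.le (by lia)
  exact_mod_cast this

lemma hyper_vol {m : ℕ} (y : Fin m → (Fin (n + 1) → ℝ)) (hy : ∀ i, U (y i))
    (t : Fin m → ℤ) (ht : (∑ i, t i) = 1) :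
    ∑ i, ∑ j, (t i : ℝ) * (t j : ℝ) * (volume (A (y i) (y j))).toReal ≤ 0 := by
  have hint : ∀ i j, Integrable ((A (y i) (y j)).indicator (fun _ => (1 : ℝ))) volume := by
    intro i j
    exact (integrable_indicator_iff (A_meas _ _)).2
      (integrableOn_const (A_fin (hy i) (hy j)).ne)
  have hval : ∀ i j, (volume (A (y i) (y j))).toReal =
      ∫ v, (A (y i) (y j)).indicator (fun _ => (1 : ℝ)) v := by
    intro i j
    rw [integral_indicator (A_meas _ _)]
    simp [Measure.real]
  simp_rw [hval, ← integral_const_mul]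
  have : ∀ i, ∑ j, ∫ v, (t i : ℝ) * (t j : ℝ) * (A (y i) (y j)).indicator (fun _ => (1 : ℝ)) v =
      ∫ v, ∑ j, (t i : ℝ) * (t j : ℝ) * (A (y i) (y j)).indicator (fun _ => (1 : ℝ)) v := by
    intro i
    rw [integral_finset_sum]
    exact fun j _ => (hint i j).const_mul _
  simp_rw [this]
  rw [← integral_finset_sum _
    (fun i _ => integrable_finset_sum _ fun j _ => (hint i j).const_mul _)]
  apply integral_nonpos
  intro v
  show ∑ i, ∑ j, (t i : ℝ) * (t j : ℝ) * (A (y i) (y j)).indicator (fun _ => (1 : ℝ)) v ≤ 0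
  classical
  by_cases hv : lorentzForm v v < 1
  · have e : ∀ i j, (t i : ℝ) * (t j : ℝ) * (A (y i) (y j)).indicator (fun _ => (1 : ℝ)) v =
        (if 0 < lorentzForm (y i) v then (t i : ℝ) else 0) *
          ((t j : ℝ) - if 0 < lorentzForm (y j) v then (t j : ℝ) else 0) := by
      intro i j
      rw [Set.indicator_apply]
      simp only [A, Set.mem_setOf_eq, hv, and_true, ← not_lt]
      by_cases h1 : 0 < lorentzForm (y i) v <;> by_cases h2 : 0 < lorentzForm (y j) v <;>
        simp [h1, h2]
    simp_rw [e, ← Finset.mul_sum, ← Finset.sum_mul, Finset.sum_sub_distrib]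
    have ht' : (∑ i, (t i : ℝ)) = 1 := by exact_mod_cast ht
    rw [ht']
    have := int_ineq (∑ i, if 0 < lorentzForm (y i) v then t i else 0)
    push_cast at this
    exact this
  · have e : ∀ i j, (A (y i) (y j)).indicator (fun _ => (1 : ℝ)) v = 0 := by
      intro i j
      apply Set.indicator_of_notMem
      exact fun h => hv h.2.2
    simp [e]

end HypAux

open HypAux in
/-- The geodesic distance on real hyperbolic space `H^n_ℝ` is a hypermetric: for
each finite family of points and integers `tᵢ` with `∑ tᵢ = 1`,
`∑ᵢⱼ tᵢ tⱼ d(xᵢ,xⱼ) ≤ 0`. -/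
theorem hyperbolic_dist_hypermetric (n : ℕ) (hn : 2 ≤ n)
    (m : ℕ) (x : Fin m → (Fin (n + 1) → ℝ))
    (hx : ∀ i, lorentzForm (x i) (x i) < 0)
    (t : Fin m → ℤ) (ht : (∑ i, t i) = 1) :
    ∑ i, ∑ j, (t i : ℝ) * (t j : ℝ) * hypDist (x i) (x j) ≤ 0 := by
  have i1 : Fin n := ⟨0, by lia⟩
  choose c hc hU using fun i => exists_unit (x i) (hx i)
  have hd : ∀ i j, hypDist (x i) (x j) * g i1 1 =
      (volume (A (c i • x i) (c j • x j))).toReal := by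
    intro i j
    rw [crofton i1 (hU i) (hU j)]
    congr 1
    have hneg := upper_neg (by linarith [(hU i).1]) (by linarith [(hU j).1]) (hU i).2 (hU j).2
    rw [hypDist, ← abs_of_neg hneg, lf_smul, lf_smul_r, abs_mul, abs_mul, hc, hc,
      ← neg_mul_neg (lorentzForm (x i) (x i)), Real.sqrt_mul (by linarith [hx i])]
    congr 1
    rw [div_eq_mul_inv, mul_inv]; ring
  have h := hyper_vol (fun i => c i • x i) hU t ht
  simp_rw [← hd, ← mul_assoc, ← Finset.sum_mul] at h
  exact nonpos_of_mul_nonpos_left h (g_pos i1)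
end

section
/- Any finite subset {x₁,…,xₘ} of real hyperbolic space H^n_ℝ, equipped with the metric √d (square root of geodesic distance), embeds isometrically into a Euclidean sphere in ℝ^p for some p. -/
open Finset

open Filter Topology

namespace HypEmb

/-- Quadratic form of a kernel. -/
def qf {m : ℕ} (K : Fin m → Fin m → ℝ) (t : Fin m → ℝ) : ℝ := ∑ i, ∑ j, t i * t j * K i j

/-- Positive (semi)definite kernel. -/
def PD {m : ℕ} (K : Fin m → Fin m → ℝ) : Prop :=
  (∀ i j, K i j = K j i) ∧ ∀ t, 0 ≤ qf K t

variable {m : ℕ}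

lemma pd_iff (K : Fin m → Fin m → ℝ) : PD K ↔ (Matrix.of K).PosSemidef := by
  rw [Matrix.posSemidef_iff_dotProduct_mulVec]
  have h1 : (Matrix.of K).IsHermitian ↔ ∀ i j, K i j = K j i := by
    rw [Matrix.IsHermitian.ext_iff]
    constructor
    · intro h i j
      simpa using h j i
    · intro h i j
      simpa using h j i
  rw [h1, PD]
  have h2 : ∀ t : Fin m → ℝ, qf K t = star t ⬝ᵥ (Matrix.of K).mulVec t := by
    intro t
    simp only [qf, dotProduct, Matrix.mulVec, Finset.mul_sum]
    refine Finset.sum_congr rfl fun i _ => Finset.sum_congr rfl fun j _ => ?_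
    simp
    ring
  simp_rw [h2]

lemma PD.mul {K L : Fin m → Fin m → ℝ} (hK : PD K) (hL : PD L) :
    PD (fun i j => K i j * L i j) := by
  rw [pd_iff] at *
  exact hK.hadamard hL

lemma qf_add (K L : Fin m → Fin m → ℝ) (t : Fin m → ℝ) :
    qf (fun i j => K i j + L i j) t = qf K t + qf L t := by
  simp only [qf, mul_add, Finset.sum_add_distrib]

lemma qf_sub (K L : Fin m → Fin m → ℝ) (t : Fin m → ℝ) :
    qf (fun i j => K i j - L i j) t = qf K t - qf L t := by
  simp only [qf, mul_sub, Finset.sum_sub_distrib]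

lemma qf_smul (c : ℝ) (L : Fin m → Fin m → ℝ) (t : Fin m → ℝ) :
    qf (fun i j => c * L i j) t = c * qf L t := by
  simp only [qf, Finset.mul_sum]
  refine Finset.sum_congr rfl fun i _ => Finset.sum_congr rfl fun j _ => ?_
  ring

lemma qf_rank (a b : Fin m → ℝ) (t : Fin m → ℝ) :
    qf (fun i j => a i * b j) t = (∑ i, t i * a i) * (∑ i, t i * b i) := by
  simp only [qf, Finset.sum_mul_sum]
  refine Finset.sum_congr rfl fun i _ => Finset.sum_congr rfl fun j _ => ?_
  ring

lemma PD.add {K L : Fin m → Fin m → ℝ} (hK : PD K) (hL : PD L) :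
    PD (fun i j => K i j + L i j) :=
  ⟨fun i j => by beta_reduce; rw [hK.1, hL.1], fun t => by
    rw [qf_add]; exact add_nonneg (hK.2 t) (hL.2 t)⟩

lemma PD.smul {K : Fin m → Fin m → ℝ} (hK : PD K) {c : ℝ} (hc : 0 ≤ c) :
    PD (fun i j => c * K i j) :=
  ⟨fun i j => by beta_reduce; rw [hK.1], fun t => by
    rw [qf_smul]; exact mul_nonneg hc (hK.2 t)⟩

lemma pd_rank (a : Fin m → ℝ) : PD (fun i j => a i * a j) :=
  ⟨fun i j => mul_comm _ _, fun t => by rw [qf_rank]; exact mul_self_nonneg _⟩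

lemma pd_zero : PD (fun _ _ : Fin m => (0 : ℝ)) := ⟨fun _ _ => rfl, fun t => by simp [qf]⟩

lemma pd_one : PD (fun _ _ : Fin m => (1 : ℝ)) := by
  simpa using pd_rank (fun _ : Fin m => (1 : ℝ))

lemma PD.pow {K : Fin m → Fin m → ℝ} (hK : PD K) (k : ℕ) : PD (fun i j => K i j ^ k) := by
  induction k with
  | zero => simpa using pd_one
  | succ k ih => simpa only [pow_succ] using ih.mul hK

lemma PD.sum {n : ℕ} {K : Fin n → Fin m → Fin m → ℝ} (hK : ∀ l, PD (K l)) :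
    PD (fun i j => ∑ l, K l i j) := by
  refine ⟨fun i j => Finset.sum_congr rfl fun l _ => (hK l).1 i j, fun t => ?_⟩
  have : qf (fun i j => ∑ l, K l i j) t = ∑ l, qf (K l) t := by
    simp only [qf, Finset.mul_sum]
    have h1 : ∀ i : Fin m, ∑ j, ∑ l, t i * t j * K l i j = ∑ l, ∑ j, t i * t j * K l i j :=
      fun i => Finset.sum_comm
    simp only [h1]
    exact Finset.sum_comm
  rw [this]
  exact Finset.sum_nonneg fun l _ => (hK l).2 t

lemma qf_tendsto {F : ℕ → Fin m → Fin m → ℝ} {S : Fin m → Fin m → ℝ}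
    (h : ∀ i j, Tendsto (fun n => F n i j) atTop (𝓝 (S i j))) (t : Fin m → ℝ) :
    Tendsto (fun n => qf (F n) t) atTop (𝓝 (qf S t)) :=
  tendsto_finsetSum _ fun i _ => tendsto_finsetSum _ fun j _ => (h i j).const_mul _

lemma pd_tendsto {F : ℕ → Fin m → Fin m → ℝ} {S : Fin m → Fin m → ℝ}
    (hF : ∀ n, PD (F n))
    (h : ∀ i j, Tendsto (fun n => F n i j) atTop (𝓝 (S i j))) : PD S := by
  refine ⟨fun i j => tendsto_nhds_unique (h i j) ?_, fun t => ?_⟩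
  · simpa only [(hF _).1 j i] using h j i
  · exact ge_of_tendsto' (qf_tendsto h t) fun n => (hF n).2 t

lemma qf_hasSum {F : ℕ → Fin m → Fin m → ℝ} {S : Fin m → Fin m → ℝ}
    (h : ∀ i j, HasSum (fun n => F n i j) (S i j)) (t : Fin m → ℝ) :
    HasSum (fun n => qf (F n) t) (qf S t) :=
  hasSum_sum fun i _ => hasSum_sum fun j _ => (h i j).mul_left _

lemma pd_hasSum_sub {F : ℕ → Fin m → Fin m → ℝ} {S : Fin m → Fin m → ℝ}
    (hF : ∀ n, PD (F n)) (h : ∀ i j, HasSum (fun n => F n i j) (S i j)) (k : ℕ) :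
    PD (fun i j => S i j - F k i j) := by
  refine ⟨fun i j => ?_, fun t => ?_⟩
  · have h1 : HasSum (fun n => F n i j) (S j i) := by
      simpa only [(hF _).1 j i] using h j i
    beta_reduce
    rw [(h i j).unique h1, (hF k).1]
  · rw [qf_sub, sub_nonneg]
    exact le_hasSum (qf_hasSum h t) k fun n _ => (hF n).2 t

lemma pd_hasSum {F : ℕ → Fin m → Fin m → ℝ} {S : Fin m → Fin m → ℝ}
    (hF : ∀ n, PD (F n)) (h : ∀ i j, HasSum (fun n => F n i j) (S i j)) : PD S := by
  simpa using (pd_hasSum_sub hF h 0).add (hF 0)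

lemma pd_pow_sub {A B : Fin m → Fin m → ℝ} (hA : PD A) (hB : PD B)
    (h : PD (fun i j => A i j - B i j)) (k : ℕ) :
    PD (fun i j => A i j ^ k - B i j ^ k) := by
  induction k with
  | zero => simpa using pd_zero
  | succ k ih =>
    have := (ih.mul hA).add ((hB.pow k).mul h)
    convert this using 3
    ring

/-- The kernel `-log (1 - K)`. -/
lemma pd_neg_log {K : Fin m → Fin m → ℝ} (hK : PD K) (h : ∀ i j, |K i j| < 1) :
    PD (fun i j => -Real.log (1 - K i j)) ∧
    ∀ k : ℕ, PD (fun i j => -Real.log (1 - K i j) - K i j ^ (k + 1) / (k + 1)) := by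
  have hF : ∀ n : ℕ, PD (fun i j => K i j ^ (n + 1) / (n + 1)) := by
    intro n
    have := (hK.pow (n + 1)).smul (c := (1 / ((n : ℝ) + 1))) (by positivity)
    convert this using 3
    ring
  have hS := fun i j => Real.hasSum_pow_div_log_of_abs_lt_one (h i j)
  exact ⟨pd_hasSum hF hS, pd_hasSum_sub hF hS⟩

lemma pd_inv {K : Fin m → Fin m → ℝ} (hK : PD K) (h : ∀ i j, |K i j| < 1) :
    PD (fun i j => (1 - K i j)⁻¹) ∧ PD (fun i j => (1 - K i j)⁻¹ - 1) := by
  have hS := fun i j => hasSum_geometric_of_abs_lt_one (h i j)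
  have := pd_hasSum_sub (fun n => hK.pow n) hS 0
  exact ⟨pd_hasSum (fun n => hK.pow n) hS, by simpa using this⟩

/-- iteration converging to `1 - √(1 - z)` -/
noncomputable def it (z : ℝ) : ℕ → ℝ
  | 0 => 0
  | n + 1 => (z + it z n ^ 2) / 2

lemma it_tendsto {z : ℝ} (h0 : 0 ≤ z) (h1 : z ≤ 1) :
    Tendsto (it z) atTop (𝓝 (1 - Real.sqrt (1 - z))) := by
  have hb : ∀ n, 0 ≤ it z n ∧ it z n ≤ 1 := by
    intro n
    induction n with
    | zero => simp [it]
    | succ n ih =>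
      simp only [it]
      constructor
      · positivity
      · nlinarith
  have hm : Monotone (it z) := by
    refine monotone_nat_of_le_succ fun n => ?_
    induction n with
    | zero => simp [it]; positivity
    | succ n ih =>
      have h3 := (hb n).1
      simp only [it] at ih ⊢
      gcongr
  have hbd : BddAbove (Set.range (it z)) := ⟨1, by rintro _ ⟨n, rfl⟩; exact (hb n).2⟩
  have ht := tendsto_atTop_ciSup hm hbd
  set l := ⨆ i, it z i
  have hl : l ≤ 1 := le_of_tendsto' ht fun n => (hb n).2
  have h2 : Tendsto (fun n => it z (n + 1)) atTop (𝓝 ((z + l ^ 2) / 2)) := by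
    simp only [it]
    exact ((ht.pow 2).const_add z).div_const 2
  have h3 := tendsto_nhds_unique h2 (ht.comp (tendsto_add_atTop_nat 1))
  have h4 : Real.sqrt (1 - z) = 1 - l := by
    rw [Real.sqrt_eq_iff_mul_self_eq (by linarith) (by linarith)]
    nlinarith
  rw [h4]
  simpa using ht

lemma pd_sqrt {z : Fin m → Fin m → ℝ} (hz : PD z) (h0 : ∀ i j, 0 ≤ z i j)
    (h1 : ∀ i j, z i j ≤ 1) : PD (fun i j => 1 - Real.sqrt (1 - z i j)) := by
  refine pd_tendsto (F := fun n i j => it (z i j) n) ?_ fun i j => it_tendsto (h0 i j) (h1 i j)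
  intro n
  induction n with
  | zero => exact pd_zero
  | succ n ih =>
    have := (hz.add (ih.pow 2)).smul (c := 1 / 2) (by norm_num)
    convert this using 3
    simp only [it]
    ring

/-- Functionals bounded by the quadratic form. -/
def Bd (M : Fin m → Fin m → ℝ) (a : Fin m → ℝ) : Prop :=
  ∃ K : ℝ, 0 ≤ K ∧ ∀ t : Fin m → ℝ, (∑ i, t i * a i) ^ 2 ≤ K * qf M t

lemma Bd.sum {M : Fin m → Fin m → ℝ} (hM : PD M) (f : ℕ → Fin m → ℝ) (c : ℕ → ℝ) (N : ℕ)
    (hf : ∀ k < N, c k = 0 ∨ Bd M (f k)) : Bd M (fun i => ∑ k ∈ Finset.range N, c k * f k i) := by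
  induction N with
  | zero => exact ⟨0, le_rfl, fun t => by simp⟩
  | succ N ih =>
    obtain ⟨K, hK, h⟩ := ih fun k hk => hf k (by omega)
    rcases hf N (by omega) with h0 | ⟨L, hL, h'⟩
    · refine ⟨K, hK, fun t => ?_⟩
      simpa [Finset.sum_range_succ, h0] using h t
    · refine ⟨2 * K + 2 * (c N ^ 2 * L), by positivity, fun t => ?_⟩
      have e : ∑ i, t i * ∑ k ∈ Finset.range (N + 1), c k * f k i =
          (∑ i, t i * ∑ k ∈ Finset.range N, c k * f k i) + c N * ∑ i, t i * f N i := by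
        simp only [Finset.sum_range_succ, mul_add, Finset.sum_add_distrib]
        congr 1
        rw [Finset.mul_sum]
        refine Finset.sum_congr rfl fun i _ => ?_
        ring
      rw [e]
      have h1 := h t
      have h2 := mul_le_mul_of_nonneg_left (h' t) (sq_nonneg (c N))
      set A := ∑ i, t i * ∑ k ∈ Finset.range N, c k * f k i
      set B := ∑ i, t i * f N i
      nlinarith [sq_nonneg (A - c N * B)]

lemma Bd.finish {M : Fin m → Fin m → ℝ} (hM : PD M) {a : Fin m → ℝ} (ha : Bd M a) :
    ∃ C : ℝ, PD (fun i j => C - a i - a j + M i j) := by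
  obtain ⟨K, hK, h⟩ := ha
  refine ⟨K, fun i j => by beta_reduce; rw [hM.1 i j]; ring, fun t => ?_⟩
  have e : qf (fun i j => K - a i - a j + M i j) t =
      K * ((∑ i, t i) * ∑ i, t i) - 2 * ((∑ i, t i) * ∑ i, t i * a i) + qf M t := by
    have e1 := qf_rank (fun _ : Fin m => (1 : ℝ)) (fun _ => 1) t
    have e2 := qf_rank (fun _ : Fin m => (1 : ℝ)) a t
    have e3 := qf_rank a (fun _ : Fin m => (1 : ℝ)) t
    simp only [mul_one, one_mul] at e1 e2 e3
    have e4 := qf_smul K (fun _ _ : Fin m => (1 : ℝ)) t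
    simp only [mul_one] at e4
    rw [qf_add, qf_sub (fun i j => K - a i) (fun i j => a j),
      qf_sub (fun i j => K) (fun i j => a i), e4, e1, e2, e3]
    ring
  rw [e]
  have h1 := h t
  have h2 := hM.2 t
  set s := ∑ i, t i
  set b := ∑ i, t i * a i
  set Q := qf M t
  have h3 : (2 * (s * b)) ^ 2 ≤ (K * (s * s) + Q) ^ 2 := by
    have := mul_le_mul_of_nonneg_left h1 (sq_nonneg s)
    nlinarith [sq_nonneg (K * (s * s) - Q)]
  have h4 := abs_le_of_sq_le_sq' h3 (add_nonneg (mul_nonneg hK (mul_self_nonneg s)) h2)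
  linarith [h4.2]

/-- Embedding from a kernel. -/
lemma embed (D : Fin m → Fin m → ℝ) (hD : ∀ i, D i i = 0) (C : ℝ)
    (h : PD (fun i j => C - D i j)) :
    ∃ (p : ℕ) (f : Fin m → EuclideanSpace ℝ (Fin p))
      (c : EuclideanSpace ℝ (Fin p)) (r : ℝ),
      (∀ i j, dist (f i) (f j) = Real.sqrt (D i j)) ∧ (∀ i, dist (f i) c = r) := by
  have h' := h.smul (c := 1 / 2) (by norm_num)
  rw [pd_iff] at h'
  obtain ⟨B, hB⟩ : ∃ B : Matrix (Fin m) (Fin m) ℝ,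
      (Matrix.of fun i j => 1 / 2 * (C - D i j)) = B.conjTranspose * B := by
    open scoped MatrixOrder in
    exact CStarAlgebra.nonneg_iff_eq_star_mul_self.mp h'.nonneg
  have hB' : ∀ i j, ∑ k, B k i * B k j = 1 / 2 * (C - D i j) := by
    intro i j
    have := congrFun (congrFun hB i) j
    simp only [Matrix.of_apply, Matrix.mul_apply, Matrix.conjTranspose_apply, star_trivial] at this
    exact this.symm
  refine ⟨m, fun i => WithLp.toLp 2 (fun k => B k i), 0, Real.sqrt (1 / 2 * C), ?_, ?_⟩
  · intro i j
    rw [EuclideanSpace.dist_eq]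
    congr 1
    simp only [Real.dist_eq, sq_abs]
    have : ∀ k, (B k i - B k j) ^ 2 = B k i * B k i + B k j * B k j - 2 * (B k i * B k j) :=
      fun k => by ring
    simp only [this, Finset.sum_sub_distrib, Finset.sum_add_distrib, ← Finset.mul_sum, hB', hD]
    ring
  · intro i
    rw [EuclideanSpace.dist_eq]
    congr 1
    have := hB' i i
    rw [hD, sub_zero] at this
    rw [← this]
    refine Finset.sum_congr rfl fun k _ => ?_
    simp [sq]

lemma arcosh_eq {u : ℝ} (hu : 1 ≤ u) :
    arcosh u = Real.log u + Real.log 2 +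
      Real.log (1 - (1 - Real.sqrt (1 - (u ^ 2)⁻¹)) / 2) := by
  have hu0 : 0 < u := by linarith
  have e : Real.sqrt (u ^ 2 - 1) = u * Real.sqrt (1 - (u ^ 2)⁻¹) := by
    have e1 : u ^ 2 - 1 = u ^ 2 * (1 - (u ^ 2)⁻¹) := by field_simp
    rw [e1, Real.sqrt_mul (sq_nonneg u), Real.sqrt_sq hu0.le]
  have hs := Real.sqrt_nonneg (1 - (u ^ 2)⁻¹)
  rw [arcosh, e, ← Real.log_mul hu0.ne' (by norm_num), ← Real.log_mul (by positivity) (by linarith)]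
  congr 1
  ring

lemma rev_cs {A B p : ℝ} (hA : 0 ≤ A) (hB : 0 ≤ B) (hA1 : A ≤ 1) (hB1 : B ≤ 1)
    (h : p ^ 2 ≤ A * B) : (1 - A) * (1 - B) ≤ (1 - p) ^ 2 := by
  obtain ⟨a, ha, rfl⟩ : ∃ a, 0 ≤ a ∧ a ^ 2 = A := ⟨Real.sqrt A, Real.sqrt_nonneg _, Real.sq_sqrt hA⟩
  obtain ⟨b, hb, rfl⟩ : ∃ b, 0 ≤ b ∧ b ^ 2 = B := ⟨Real.sqrt B, Real.sqrt_nonneg _, Real.sq_sqrt hB⟩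
  have h1 : p ≤ a * b :=
    (abs_le_of_sq_le_sq' (by rw [mul_pow]; exact h) (mul_nonneg ha hb)).2
  have ha1 : a ≤ 1 := by nlinarith
  have hb1 : b ≤ 1 := by nlinarith
  have hab : a * b ≤ 1 := by nlinarith
  have h2 : (1 - a * b) ^ 2 ≤ (1 - p) ^ 2 := by
    apply pow_le_pow_left₀ <;> linarith
  nlinarith [sq_nonneg (a - b)]

lemma interp (w : Fin m → ℝ) : ∃ p : Polynomial ℝ, p.coeff 0 = 0 ∧
    ∀ i, p.eval (w i) = -(1 / 2) * Real.log (w i) := by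
  have key := fun (x : ℝ) (hx : x ∈ (insert 0 (Finset.univ.image w) : Finset ℝ)) =>
    Lagrange.eval_interpolate_at_node (v := id)
      (fun x : ℝ => -(1 / 2) * Real.log x) (Set.injOn_id _) hx
  refine ⟨_, ?_, fun i => key (w i) (by simp)⟩
  rw [Polynomial.coeff_zero_eq_eval_zero]
  refine (key 0 (by simp)).trans ?_
  simp

/-- Main analytic statement in the Klein model. -/
lemma klein {n : ℕ} (v : Fin m → Fin n → ℝ) (hv : ∀ i, ∑ l, v i l * v i l < 1) :
    ∃ C, PD (fun i j => C - arcosh ((1 - ∑ l, v i l * v j l) /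
      Real.sqrt ((1 - ∑ l, v i l * v i l) * (1 - ∑ l, v j l * v j l)))) ∧
      ∀ i, arcosh ((1 - ∑ l, v i l * v i l) /
      Real.sqrt ((1 - ∑ l, v i l * v i l) * (1 - ∑ l, v i l * v i l))) = 0 := by
  set P : Fin m → Fin m → ℝ := fun i j => ∑ l, v i l * v j l with hP
  set w : Fin m → ℝ := fun i => 1 - P i i with hw
  have hw0 : ∀ i, 0 < w i := fun i => by simpa [hw, hP] using hv i
  have hPn : ∀ i, 0 ≤ P i i := fun i => Finset.sum_nonneg fun l _ => mul_self_nonneg _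
  have hPpd : PD P := PD.sum fun l => pd_rank (fun i => v i l)
  have hcs : ∀ i j, P i j ^ 2 ≤ P i i * P j j := by
    intro i j
    have := Finset.sum_mul_sq_le_sq_mul_sq Finset.univ (v i) (v j)
    simpa only [hP, sq] using this
  have hP1 : ∀ i j, |P i j| < 1 := by
    intro i j
    rw [← sq_lt_one_iff_abs_lt_one]
    have := hw0 i
    have := hw0 j
    have := hPn i
    have := hPn j
    have := hcs i j
    simp only [hw] at *
    nlinarith
  have hPlt : ∀ i j, 0 < 1 - P i j := fun i j => by linarith [(abs_lt.mp (hP1 i j)).2]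
  -- the kernel z
  set R : Fin m → Fin m → ℝ := fun i j => (1 - P i j)⁻¹ with hR
  obtain ⟨hRpd, hR1⟩ := pd_inv hPpd hP1
  set z : Fin m → Fin m → ℝ := fun i j => (w i * w j) * R i j ^ 2 with hz
  have hzpd : PD z := (pd_rank w).mul (hRpd.pow 2)
  have hz0 : ∀ i j, 0 < z i j := by
    intro i j
    have := hw0 i
    have := hw0 j
    have := inv_pos.mpr (hPlt i j)
    simp only [hz, hR]
    positivity
  have hz1 : ∀ i j, z i j ≤ 1 := by
    intro i j
    simp only [hz, hR, inv_pow, ← div_eq_mul_inv]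
    rw [div_le_one (by have := hPlt i j; positivity)]
    have := hcs i j
    exact rev_cs (hPn i) (hPn j) (by have := hw0 i; simp only [hw] at this; linarith)
      (by have := hw0 j; simp only [hw] at this; linarith) this
  have hzw : PD (fun i j => z i j - w i * w j) := by
    have := (pd_rank w).mul (((hRpd.mul hR1)).add hR1)
    convert this using 3
    simp only [hz, hR]
    ring
  set h : Fin m → Fin m → ℝ := fun i j => 1 - Real.sqrt (1 - z i j) with hh
  have hhpd : PD h := pd_sqrt hzpd (fun i j => (hz0 i j).le) hz1
  have hhz : PD (fun i j => h i j - z i j / 2) := by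
    have := (hhpd.pow 2).smul (c := 1 / 2) (by norm_num)
    convert this using 3 with i j
    have := Real.sq_sqrt (sub_nonneg.mpr (hz1 i j))
    simp only [hh]
    nlinarith
  set g : Fin m → Fin m → ℝ := fun i j => h i j / 2 with hg
  have hgpd : PD g := by
    have := hhpd.smul (c := 1 / 2) (by norm_num)
    convert this using 3
    simp only [hg]; ring
  have hgw : PD (fun i j => g i j - (w i * w j) / 4) := by
    have := (hhz.smul (c := 1 / 2) (by norm_num)).add (hzw.smul (c := 1 / 4) (by norm_num))
    convert this using 3
    simp only [hg]; ring
  have hwpd : PD (fun i j => (w i * w j) / 4) := by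
    have := (pd_rank w).smul (c := 1 / 4) (by norm_num)
    convert this using 3
    ring
  have hg1 : ∀ i j, |g i j| < 1 := by
    intro i j
    have a1 := Real.sqrt_nonneg (1 - z i j)
    have a2 : Real.sqrt (1 - z i j) ≤ 1 := by
      exact Real.sqrt_le_one.mpr (by linarith [hz0 i j])
    simp only [hg, hh]
    rw [abs_lt]
    constructor <;> linarith
  obtain ⟨hLpd, -⟩ := pd_neg_log hPpd hP1
  obtain ⟨hMpd, hM⟩ := pd_neg_log hgpd hg1
  set M : Fin m → Fin m → ℝ := fun i j => -Real.log (1 - g i j) with hMdef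
  have hbd : ∀ k : ℕ, Bd M (fun i => w i ^ (k + 1)) := by
    intro k
    refine ⟨(k + 1) * 4 ^ (k + 1), by positivity, fun t => ?_⟩
    have h1 := (hM k).add ((pd_pow_sub hgpd hwpd hgw (k + 1)).smul (c := 1 / ((k : ℝ) + 1))
      (by positivity))
    have h2 : PD (fun i j => M i j - 1 / ((k + 1) * 4 ^ (k + 1)) *
        (w i ^ (k + 1) * w j ^ (k + 1))) := by
      convert h1 using 3
      simp only [hMdef, div_pow, mul_pow]
      field_simp
      ring
    have h3 := h2.2 t
    rw [qf_sub, qf_smul, qf_rank (fun i => w i ^ (k + 1)) (fun i => w i ^ (k + 1)), ← sq,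
      sub_nonneg, one_div, inv_mul_le_iff₀ (by positivity)] at h3
    exact h3
  -- interpolation
  obtain ⟨p, hp0, hpw⟩ := interp w
  have hbda : Bd M (fun i => -(1 / 2) * Real.log (w i)) := by
    have := Bd.sum hMpd (fun k i => w i ^ k) p.coeff (p.natDegree + 1) (by
      intro k _
      rcases k with _ | k
      · exact Or.inl hp0
      · exact Or.inr (hbd k))
    convert this using 2 with i
    rw [← hpw, Polynomial.eval_eq_sum_range]
  obtain ⟨C, hC⟩ := hbda.finish hMpd
  have key : ∀ i j, arcosh ((1 - P i j) / Real.sqrt (w i * w j)) =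
      -(1 / 2) * Real.log (w i) + -(1 / 2) * Real.log (w j) + Real.log (1 - P i j) + Real.log 2
        - M i j := by
    intro i j
    have hi := hw0 i
    have hj := hw0 j
    have hij := hPlt i j
    have hsq : Real.sqrt (w i * w j) ^ 2 = w i * w j := Real.sq_sqrt (by positivity)
    have hpos : 0 < Real.sqrt (w i * w j) := Real.sqrt_pos.mpr (by positivity)
    have hzz : (((1 - P i j) / Real.sqrt (w i * w j)) ^ 2)⁻¹ = z i j := by
      rw [div_pow, hsq, inv_div]
      simp only [hz, hR]
      field_simp
    have hu : 1 ≤ (1 - P i j) / Real.sqrt (w i * w j) := by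
      have h1 := hz1 i j
      rw [← hzz] at h1
      have h2 : 0 < (1 - P i j) / Real.sqrt (w i * w j) := by positivity
      rw [inv_le_one₀ (by positivity)] at h1
      nlinarith
    rw [arcosh_eq hu, hzz, Real.log_div hij.ne' hpos.ne', Real.log_sqrt (by positivity),
      Real.log_mul hi.ne' hj.ne']
    simp only [hMdef, hg, hh]
    ring
  refine ⟨C + Real.log 2, ?_, ?_⟩
  · have := hC.add hLpd
    convert this using 3 with i j
    have k := key i j
    simp only [hw, hP] at k
    simp only [hw, hP]
    rw [k]
    ring
  · intro i
    have hi := hw0 i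
    have e : (1 - P i i) / Real.sqrt (w i * w i) = 1 := by
      rw [Real.sqrt_mul_self hi.le]
      exact div_self hi.ne'
    have : arcosh 1 = 0 := by simp [arcosh]
    rw [← this]
    exact congrArg arcosh e

end HypEmb

/-- Any finite subset `{x₁,…,xₘ}` of real hyperbolic space `H^n_ℝ`, equipped with
the metric `√d` (square root of geodesic distance), embeds isometrically into a
Euclidean sphere in `ℝ^p` for some `p`. -/
theorem hyperbolic_finite_subset_embeds_in_sphere (n : ℕ) (hn : 2 ≤ n)
    (m : ℕ) (x : Fin m → (Fin (n + 1) → ℝ))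
    (hx : ∀ i, lorentzForm (x i) (x i) < 0) :
    ∃ (p : ℕ) (f : Fin m → EuclideanSpace ℝ (Fin p))
      (c : EuclideanSpace ℝ (Fin p)) (r : ℝ),
      (∀ i j, dist (f i) (f j) = Real.sqrt (hypDist (x i) (x j))) ∧
      (∀ i, dist (f i) c = r) := by
  have hx0 : ∀ i, x i 0 ≠ 0 := by
    intro i h0
    have := hx i
    simp only [lorentzForm, h0] at this
    have h2 : 0 ≤ ∑ l : Fin n, x i l.succ * x i l.succ :=
      Finset.sum_nonneg fun l _ => mul_self_nonneg _
    linarith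
  set v : Fin m → Fin n → ℝ := fun i l => x i l.succ / x i 0 with hv
  have hform : ∀ i j, lorentzForm (x i) (x j) = -(x i 0 * x j 0) * (1 - ∑ l, v i l * v j l) := by
    intro i j
    have e : ∀ l, x i l.succ * x j l.succ = (x i 0 * x j 0) * (v i l * v j l) := by
      intro l
      have := hx0 i
      have := hx0 j
      simp only [hv]
      field_simp
    simp only [lorentzForm, e, ← Finset.mul_sum]
    ring
  have hv1 : ∀ i, ∑ l, v i l * v i l < 1 := by
    intro i
    have h1 := hx i
    rw [hform] at h1
    have h2 : 0 < x i 0 * x i 0 := mul_self_pos.mpr (hx0 i)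
    by_contra hc
    push Not at hc
    nlinarith
  have hd : ∀ i j, hypDist (x i) (x j) = arcosh ((1 - ∑ l, v i l * v j l) /
      Real.sqrt ((1 - ∑ l, v i l * v i l) * (1 - ∑ l, v j l * v j l))) := by
    intro i j
    have hpos : 0 < 1 - ∑ l, v i l * v j l := by
      have h1 := hv1 i
      have h2 := hv1 j
      have h3 : 0 ≤ ∑ l, (v i l - v j l) ^ 2 := Finset.sum_nonneg fun l _ => sq_nonneg _
      have h4 : ∑ l, (v i l - v j l) ^ 2 =
          ∑ l, v i l * v i l + ∑ l, v j l * v j l - 2 * ∑ l, v i l * v j l := by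
        rw [Finset.mul_sum, ← Finset.sum_add_distrib, ← Finset.sum_sub_distrib]
        exact Finset.sum_congr rfl fun l _ => by ring
      linarith
    have hij : 0 < |x i 0 * x j 0| := abs_pos.mpr (mul_ne_zero (hx0 i) (hx0 j))
    rw [hypDist, hform i j, hform i i, hform j j]
    congr 1
    have e : -(x i 0 * x i 0) * (1 - ∑ l, v i l * v i l) *
        (-(x j 0 * x j 0) * (1 - ∑ l, v j l * v j l)) =
        (x i 0 * x j 0) ^ 2 * ((1 - ∑ l, v i l * v i l) * (1 - ∑ l, v j l * v j l)) := by ring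
    rw [e, Real.sqrt_mul (sq_nonneg _), Real.sqrt_sq_eq_abs, abs_mul, abs_neg, abs_of_pos hpos,
      mul_div_mul_left _ _ hij.ne']
  obtain ⟨C, hC, h0⟩ := HypEmb.klein v hv1
  refine HypEmb.embed (fun i j => hypDist (x i) (x j)) (fun i => ?_) C ?_
  · simp only [hd]
    exact h0 i
  · simp only [hd]
    exact hC
end
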